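/- Let R be a multiplication ring with only finitely many minimal prime ideals and let M be a multiplication R-module. Then the endomorphism ring End_R(M) is a multiplication ring. -/

import Mathlib

/-!
The ring `R` turns out to be Noetherian, and over a Noetherian ring the endomorphism ring of a
multiplication module is a quotient of the base ring; multiplication rings pass to quotients.

*`R` is Noetherian.* If `P < Q` are primes, then `P = I Q` forces `P = P Q`, whence every `x ∈ P`
satisfies `x = q x` for some `q ∈ Q` (`exists_mul_eq_self_of_lt`), i.e. `P` localizes to zero at `Q`. Hence
distinct minimal primes are comaximal. By Cohen's theorem it is enough to see that primes are
finitely generated. A non-minimal prime contains, by prime avoidance, an element `a` outside all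
minimal primes; such an `a` is not a zero divisor, so writing `(a) = I P` shows that `P` is
invertible. A minimal prime `P` contains an `a` with `1 - a` in all other minimal primes, and `P`
is generated by `a` together with a local generator `b` of `P` at `P` itself, as one checks at each
maximal ideal.

*Endomorphisms are scalars.* A multiplication module over a Noetherian ring is Noetherian, since
`N ↦ (N : M)` is strictly monotone. At each maximal ideal `m`, a multiplication module is
either cyclic or zero (`cyclic_or_torsion_at`), and in the second case finite generation provides
an element outside `m` annihilating the whole module. Submodules `I M` are
stable under endomorphisms, so an endomorphism `f` acts as a scalar locally at each `m`, and these scalars glue since the conductor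
`{r | r f is a scalar}` is an ideal contained in no maximal ideal.
-/

/-- A ring `R` is a multiplication ring if for all ideals `I`, `J` of `R` with `J ⊆ I` there
exists an ideal `I'` of `R` such that `J = I'I`. (Stated for a general ring so that it can be
applied to the endomorphism ring `End_R(M)`, which is commutative for a multiplication
module `M`.) -/
def IsMultiplicationRing (R : Type*) [Ring R] : Prop :=
  ∀ I J : Ideal R, J ≤ I → ∃ I' : Ideal R, J = I' * I

/-- An `R`-module `M` is a multiplication module if every submodule `N` of `M` is of the form
`N = IM` for some ideal `I` of `R`. -/
def IsMultiplicationModule (R : Type*) (M : Type*) [Semiring R] [AddCommMonoid M]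
    [Module R M] : Prop :=
  ∀ N : Submodule R M, ∃ I : Ideal R, N = I • (⊤ : Submodule R M)

/-! ### Local arguments -/

/-- Localized at (the complement of) `m`, a submodule `K` all of whose submodules are multiples of
`K` is either cyclic or zero. The second alternative is expressed as `q • x = x` with `q ∈ m`. -/
lemma cyclic_or_torsion_at {R M : Type*} [CommRing R] [AddCommGroup M] [Module R M]
    (K : Submodule R M) (hK : ∀ N ≤ K, ∃ I : Ideal R, N = I • K) (m : Ideal R) :
    (∃ x ∈ K, ∃ r ∉ m, ∀ y ∈ K, r • y ∈ Submodule.span R {x}) ∨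
      ∀ x ∈ K, ∃ q ∈ m, q • x = x := by
  by_cases h : K ≤ m • K
  · right
    intro x hx
    obtain ⟨I, hI⟩ := hK (Submodule.span R {x}) (by simpa using hx)
    have h1 : Submodule.span R {x} ≤ m • Submodule.span R {x} := by
      conv_lhs => rw [hI]
      rw [hI, ← mul_smul, mul_comm, mul_smul]
      exact Submodule.smul_mono le_rfl h
    simpa [Submodule.mem_smul_span_singleton] using h1 (Submodule.mem_span_singleton_self x)
  · left
    obtain ⟨x, hx, hxm⟩ := Set.not_subset.1 h
    obtain ⟨I, hI⟩ := hK (Submodule.span R {x}) (by simpa using hx)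
    have hIm : ¬ I ≤ m := fun hle => hxm <|
      Submodule.smul_mono_left hle (hI ▸ Submodule.mem_span_singleton_self x)
    obtain ⟨r, hr, hrm⟩ := Set.not_subset.1 hIm
    exact ⟨x, hx, r, hrm, fun y hy => hI ▸ Submodule.smul_mem_smul hr hy⟩

/-- A submodule `J` contains `x` as soon as it does so locally at every maximal ideal. -/
lemma mem_of_locally {R M : Type*} [CommRing R] [AddCommGroup M] [Module R M]
    (J : Submodule R M) (x : M)
    (h : ∀ m : Ideal R, m.IsMaximal → ∃ r ∉ m, r • x ∈ J) : x ∈ J := by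
  by_contra hx
  have hne : J.comap (LinearMap.toSpanSingleton R M x) ≠ ⊤ := by
    intro h1
    have h2 : (1 : R) ∈ J.comap (LinearMap.toSpanSingleton R M x) := h1 ▸ Submodule.mem_top
    exact hx (by simpa using h2)
  obtain ⟨m, hm, hle⟩ := Ideal.exists_le_maximal _ hne
  obtain ⟨r, hr, hrx⟩ := h m hm
  exact hr (hle (by simpa using hrx))

lemma one_sub_notMem {R : Type*} [CommRing R] {m : Ideal R} (hm : m ≠ ⊤) {q : R} (hq : q ∈ m) :
    1 - q ∉ m := fun h => hm <| (Ideal.eq_top_iff_one m).2 <| by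
  simpa using m.add_mem h hq

/-! ### Multiplication rings with finitely many minimal primes are Noetherian -/

namespace IsMultiplicationRing

variable {R : Type*} [CommRing R]

/-- A prime properly contained in a prime `Q` vanishes locally at `Q`. -/
lemma exists_mul_eq_self_of_lt (hR : IsMultiplicationRing R) {P Q : Ideal R}
    (hP : P.IsPrime) (hPQ : P < Q) {x : R} (hx : x ∈ P) : ∃ q ∈ Q, q * x = x := by
  obtain ⟨I, hI⟩ := hR Q P hPQ.le
  have hIP : I ≤ P := (hP.mul_le.1 hI.ge).resolve_right (not_le_of_gt hPQ)
  have hPPQ : P ≤ Q * P := by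
    conv_lhs => rw [hI]
    rw [mul_comm]
    exact Ideal.mul_mono_right hIP
  obtain ⟨K, hK⟩ := hR P (Ideal.span {x}) (by simpa using hx)
  have h1 : Ideal.span {x} ≤ Q * Ideal.span {x} := by
    conv_lhs => rw [hK]
    rw [hK, mul_left_comm]
    exact Ideal.mul_mono_right hPPQ
  exact Ideal.mem_mul_span_singleton.1 (h1 (Ideal.mem_span_singleton_self x))

lemma eq_of_minimal_le (hR : IsMultiplicationRing R) {P P' Q : Ideal R}
    (hP : P ∈ minimalPrimes R) (hP' : P' ∈ minimalPrimes R)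
    (hQ : Q.IsPrime) (h : P ≤ Q) (h' : P' ≤ Q) : P = P' := by
  have hPp : P.IsPrime := hP.1.1
  have hPp' : P'.IsPrime := hP'.1.1
  rcases h.eq_or_lt with rfl | hlt
  · exact le_antisymm (hP.2 hP'.1 h') h'
  · have hle : P ≤ P' := by
      intro x hx
      obtain ⟨q, hq, hqx⟩ := exists_mul_eq_self_of_lt hR hPp hlt hx
      have h0 : (1 - q) * x ∈ P' := by
        rw [sub_mul, hqx, one_mul, sub_self]; exact P'.zero_mem
      exact (hPp'.mem_or_mem h0).resolve_left fun h2 => one_sub_notMem hQ.ne_top hq (h' h2)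
    exact le_antisymm hle (hP'.2 hP.1 hle)

lemma fg_of_minimal (hR : IsMultiplicationRing R) (hfin : (minimalPrimes R).Finite)
    {P : Ideal R} (hP : P ∈ minimalPrimes R) : P.FG := by
  classical
  have hPp : P.IsPrime := hP.1.1
  obtain ⟨a, haP, ha⟩ : ∃ a ∈ P, ∀ P' ∈ minimalPrimes R, P' ≠ P → 1 - a ∈ P' := by
    have htop : P ⊔ ⨅ P' ∈ hfin.toFinset.erase P, P' = ⊤ := by
      refine Ideal.sup_iInf_eq_top (J := fun I : Ideal R => I) fun P' hP' => ?_
      simp only [Finset.mem_erase, Set.Finite.mem_toFinset] at hP'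
      by_contra hne
      obtain ⟨m, hm, hle⟩ := Ideal.exists_le_maximal _ hne
      exact hP'.1 (eq_of_minimal_le hR hP'.2 hP hm.isPrime
        (le_sup_right.trans hle) (le_sup_left.trans hle))
    obtain ⟨a, ha, c, hc, hac⟩ := Submodule.mem_sup.1 ((Ideal.eq_top_iff_one _).1 htop)
    refine ⟨a, ha, fun P' hP' hne => ?_⟩
    simp only [Submodule.mem_iInf, Finset.mem_erase, Set.Finite.mem_toFinset] at hc
    rw [← hac, add_sub_cancel_left]
    exact hc P' ⟨hne, hP'⟩
  -- a generator `b` of `P` locally at `P`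
  obtain ⟨b, hbP, hb⟩ : ∃ b ∈ P, ∀ x ∈ P, ∃ r ∉ P, r * x ∈ Ideal.span {b} := by
    rcases cyclic_or_torsion_at P (fun N hN => hR P N hN) P with ⟨b, hb, r, hr, h⟩ | h
    · exact ⟨b, hb, fun x hx => ⟨r, hr, h x hx⟩⟩
    · refine ⟨0, P.zero_mem, fun x hx => ?_⟩
      obtain ⟨q, hq, hqx⟩ := h x hx
      refine ⟨1 - q, one_sub_notMem hPp.ne_top hq, ?_⟩
      rw [smul_eq_mul] at hqx
      rw [sub_mul, hqx, one_mul, sub_self]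
      exact Ideal.zero_mem _
  have hPab : P = Ideal.span {a, b} := by
    refine le_antisymm (fun x hx => mem_of_locally _ x fun m hm => ?_) ?_
    · by_cases hPm : P ≤ m
      · rcases hPm.eq_or_lt with rfl | hlt
        · obtain ⟨r, hr, hrx⟩ := hb x hx
          exact ⟨r, hr, Ideal.span_mono (by simp) hrx⟩
        · obtain ⟨q, hq, hqx⟩ := exists_mul_eq_self_of_lt hR hPp hlt hx
          refine ⟨1 - q, one_sub_notMem hm.ne_top hq, ?_⟩
          rw [smul_eq_mul, sub_mul, hqx, one_mul, sub_self]
          exact Ideal.zero_mem _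
      · have := hm.isPrime
        obtain ⟨P', hP', hle⟩ := Ideal.exists_minimalPrimes_le (bot_le : (⊥ : Ideal R) ≤ m)
        have h1 : 1 - a ∈ m := hle (ha P' hP' fun h => hPm (h ▸ hle))
        refine ⟨a, fun h2 => one_sub_notMem hm.ne_top h2 h1, ?_⟩
        exact Ideal.mul_mem_right _ _ (Ideal.subset_span (by simp))
    · rw [Ideal.span_le]
      rintro y (rfl | rfl) <;> assumption
  rw [hPab]
  exact Submodule.fg_span (by simp)

/-- An element outside all minimal primes is not a zero divisor: at a maximal ideal `m`, it is
either locally a unit, or `m` properly contains a minimal prime, which vanishes at `m`. -/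
lemma eq_zero_of_mul_eq_zero (hR : IsMultiplicationRing R) {a : R}
    (ha : ∀ P ∈ minimalPrimes R, a ∉ P) {y : R} (hy : a * y = 0) : y = 0 := by
  refine (Submodule.mem_bot R).1 (mem_of_locally ⊥ y fun m hm => ?_)
  have := hm.isPrime
  obtain ⟨P, hP, hle⟩ := Ideal.exists_minimalPrimes_le (bot_le : (⊥ : Ideal R) ≤ m)
  have hPp : P.IsPrime := hP.1.1
  rcases hle.eq_or_lt with rfl | hlt
  · exact ⟨a, ha _ hP, by simpa using hy⟩
  · have hyP : y ∈ P :=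
      (hPp.mem_or_mem (hy ▸ P.zero_mem : a * y ∈ P)).resolve_left (ha P hP)
    obtain ⟨q, hq, hqy⟩ := exists_mul_eq_self_of_lt hR hPp hlt hyP
    refine ⟨1 - q, one_sub_notMem hm.ne_top hq, ?_⟩
    rw [smul_eq_mul, sub_mul, hqy, one_mul, sub_self]
    exact Submodule.zero_mem _

/-- An ideal containing a non-zero-divisor is invertible, hence finitely generated. -/
lemma fg_of_mem (hR : IsMultiplicationRing R) {I : Ideal R} {a : R} (haI : a ∈ I)
    (ha : ∀ y, a * y = 0 → y = 0) : I.FG := by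
  obtain ⟨K, hK⟩ := hR I (Ideal.span {a}) (by simpa using haI)
  have haK : a ∈ K * I := hK ▸ Ideal.mem_span_singleton_self a
  obtain ⟨T, T', hT, hT', hmem⟩ := Submodule.mem_span_mul_finite_of_mem_mul haK
  have haJ : a ∈ K * Ideal.span (T' : Set R) := by
    rw [← Ideal.span_eq K, Ideal.span_mul_span']
    exact Submodule.span_mono (Set.mul_subset_mul_right hT) hmem
  suffices h : I = Ideal.span (T' : Set R) from ⟨T', h.symm⟩
  refine le_antisymm (fun x hx => ?_) (Ideal.span_le.2 hT')
  -- `x K J ⊆ (I K) J = (a) J`, so `x a = a j` for some `j ∈ J`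
  have h1 : x * a ∈ Ideal.span {a} * Ideal.span (T' : Set R) := by
    rw [hK, mul_comm K I, mul_assoc]
    exact Ideal.mul_mem_mul hx haJ
  obtain ⟨j, hj, hja⟩ := Ideal.mem_span_singleton_mul.1 h1
  have h2 : x - j = 0 := ha _ (by rw [mul_sub, hja]; ring)
  rwa [sub_eq_zero.1 h2]

lemma isNoetherianRing (hR : IsMultiplicationRing R) (hfin : (minimalPrimes R).Finite) :
    IsNoetherianRing R := by
  refine IsNoetherianRing.of_prime fun P hP => ?_
  by_cases hmin : P ∈ minimalPrimes R
  · exact fg_of_minimal hR hfin hmin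
  · have h1 : ¬ (P : Set R) ⊆ ⋃ Q ∈ minimalPrimes R, (Q : Set R) := by
      rw [Ideal.subset_union_prime_finite hfin (f := fun Q : Ideal R => Q) ⊥ ⊥
        fun Q hQ _ _ => hQ.1.1]
      rintro ⟨Q, hQ, hle⟩
      exact hmin (le_antisymm (hQ.2 ⟨hP, bot_le⟩ hle) hle ▸ hQ)
    obtain ⟨a, haP, ha⟩ := Set.not_subset.1 h1
    refine fg_of_mem hR haP fun y => eq_zero_of_mul_eq_zero hR fun Q hQ haQ => ha ?_
    exact Set.mem_biUnion hQ haQ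

/-- Multiplication rings pass to quotients. The target is not assumed commutative so that the
lemma applies to `Module.End R M` with its own ring structure. -/
lemma of_surjective (hR : IsMultiplicationRing R) {S : Type*} [Ring S] (f : R →+* S)
    (hf : Function.Surjective f) : IsMultiplicationRing S := by
  intro I J hJI
  obtain ⟨K, hK⟩ := hR (I.comap f) (J.comap f) (Ideal.comap_mono hJI)
  refine ⟨K.map f, le_antisymm (fun y hy => ?_) (Ideal.mul_le.2 fun r hr s hs => ?_)⟩
  · obtain ⟨x, rfl⟩ := hf y
    have hx : x ∈ K * I.comap f := hK ▸ hy
    induction hx using Submodule.mul_induction_on' with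
    | mem_mul_mem k hk i hi =>
      rw [map_mul]
      exact Ideal.mul_mem_mul (Ideal.mem_map_of_mem f hk) hi
    | add u hu v hv ihu ihv =>
      rw [map_add]
      exact add_mem (ihu (hK ▸ hu : u ∈ J.comap f)) (ihv (hK ▸ hv : v ∈ J.comap f))
  · obtain ⟨k, hk, rfl⟩ := (Ideal.mem_map_iff_of_surjective f hf).1 hr
    obtain ⟨i, rfl⟩ := hf s
    rw [← map_mul]
    have h1 : k * i ∈ J.comap f := hK ▸ Ideal.mul_mem_mul hk hs
    exact h1

end IsMultiplicationRing

/-! ### Endomorphisms of multiplication modules -/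

namespace IsMultiplicationModule

variable {R M : Type*} [CommRing R] [AddCommGroup M] [Module R M]

lemma isNoetherian [IsNoetherianRing R] (hM : IsMultiplicationModule R M) : IsNoetherian R M := by
  have hinj : Function.Injective fun N : Submodule R M => N.colon (⊤ : Submodule R M) := by
    have key : ∀ N : Submodule R M, N.colon (⊤ : Submodule R M) • (⊤ : Submodule R M) = N := by
      intro N
      obtain ⟨I, hI⟩ := hM N
      refine le_antisymm (Submodule.smul_le.2 fun r hr y hy => Submodule.mem_colon.1 hr y hy) ?_
      conv_lhs => rw [hI]
      refine Submodule.smul_mono_left fun r hr => Submodule.mem_colon.2 fun y hy => ?_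
      rw [hI]
      exact Submodule.smul_mem_smul hr hy
    intro N N' h
    rw [← key N, ← key N']
    exact congrArg (· • (⊤ : Submodule R M)) h
  have hmono : StrictMono fun N : Submodule R M => N.colon (⊤ : Submodule R M) :=
    Monotone.strictMono_of_injective
      (fun N N' h => Submodule.colon_mono h le_rfl) hinj
  rw [isNoetherian_iff']
  exact hmono.wellFoundedGT

/-- Every submodule of a multiplication module is stable under endomorphisms. -/
lemma apply_mem (hM : IsMultiplicationModule R M) (f : Module.End R M) (N : Submodule R M)
    {x : M} (hx : x ∈ N) : f x ∈ N := by
  obtain ⟨I, rfl⟩ := hM N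
  have h1 : f x ∈ (I • (⊤ : Submodule R M)).map f := Submodule.mem_map_of_mem hx
  rw [Submodule.map_smul''] at h1
  exact Submodule.smul_mono le_rfl le_top h1

/-- Endomorphisms of a finitely generated multiplication module are scalars. -/
lemma algebraMap_end_surjective [Module.Finite R M] (hM : IsMultiplicationModule R M) :
    Function.Surjective (algebraMap R (Module.End R M)) := by
  intro f
  -- the image of `R` as a submodule of the endomorphisms; membership of `f` is checked locally
  suffices h : f ∈ LinearMap.range (Algebra.linearMap R (Module.End R M)) by
    simpa using h
  refine mem_of_locally _ f fun m hm => ?_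
  rcases cyclic_or_torsion_at (⊤ : Submodule R M) (fun N _ => hM N) m with
    ⟨x, -, r, hr, h⟩ | h
  · obtain ⟨c, hc⟩ := Submodule.mem_span_singleton.1
      (apply_mem hM f _ (Submodule.mem_span_singleton_self x))
    refine ⟨r, hr, r * c, ?_⟩
    ext y
    obtain ⟨d, hd⟩ := Submodule.mem_span_singleton.1 (h y trivial)
    have h1 : r • f y = d • c • x := by rw [← map_smul, ← hd, map_smul, hc]
    have h2 : (r * c) • y = d • c • x := by
      rw [mul_comm, mul_smul, ← hd]; exact smul_comm c d x
    simp only [Algebra.linearMap_apply, Module.algebraMap_end_apply, LinearMap.smul_apply, h1, h2]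
  · obtain ⟨q, hq, hqM⟩ := Submodule.exists_mem_and_smul_eq_self_of_fg_of_le_smul m
      (⊤ : Submodule R M) Module.Finite.fg_top fun x hx => by
        obtain ⟨q, hq, hqx⟩ := h x hx
        exact hqx ▸ Submodule.smul_mem_smul hq hx
    refine ⟨1 - q, one_sub_notMem hm.ne_top hq, 0, ?_⟩
    ext y
    simp [sub_smul, hqM (f y) trivial]

end IsMultiplicationModule

/-- Let `R` be a multiplication ring with only finitely many minimal prime ideals and let `M` be
a multiplication `R`-module. Then the endomorphism ring `End_R(M)` is a multiplication ring. -/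
theorem isMultiplicationRing_end
    {R : Type u} [CommRing R] (hR : IsMultiplicationRing R)
    (hfin : (minimalPrimes R).Finite)
    (M : Type v) [AddCommGroup M] [Module R M] (hM : IsMultiplicationModule R M) :
    IsMultiplicationRing (Module.End R M) := by
  have := hR.isNoetherianRing hfin
  have := hM.isNoetherian
  exact hR.of_surjective (algebraMap R (Module.End R M)) hM.algebraMap_end_surjective
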